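/- For every f ≤ n and every tuple φ⃗ = (φ_1,...,φ_n) of hope update formulas, the formula φ⃗^{n−f} → [φ⃗]Byz_f is valid on the class KH: if in a world at least n−f of the update formulas hold, then after the public hope update with φ⃗ at most f agents are faulty. -/

import Mathlib

/-- A Kripke model (raw data): valuation, and knowledge and hope relations for `n` agents. -/
structure Model (n : ℕ) (W : Type) where
  val : ℕ → W → Prop
  K : Fin n → W → W → Prop
  H : Fin n → W → W → Prop

/-- Membership in the class KH: each `K i` is an equivalence relation, each `H i` is
shift-serial, `H i ⊆ K i` (HinK), and oneH. -/
def Model.KH {n : ℕ} {W : Type} (M : Model n W) : Prop :=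
  (∀ i, Equivalence (M.K i)) ∧
  (∀ i w v, M.H i w v → ∃ z, M.H i v z) ∧
  (∀ i w v, M.H i w v → M.K i w v) ∧
  (∀ i w v, (∃ x, M.H i w x) → (∃ x, M.H i v x) → M.K i w v → M.H i w v)

/-- Formulas of the language `L_KH^pub`: atoms, negation, conjunction, knowledge `K i`,
hope `H i`, and public hope update `[φ_1,…,φ_n]ψ` (the tuple given as `Fin n → Form n`). -/
inductive Form (n : ℕ) : Type where
  | atom : ℕ → Form n
  | neg : Form n → Form n
  | and : Form n → Form n → Form n
  | know : Fin n → Form n → Form n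
  | hope : Fin n → Form n → Form n
  | upd : (Fin n → Form n) → Form n → Form n

/-- Replace the hope relations: `w H_i^χ v` iff `w K_i v`, `c i` holds at `w`, and at `v`. -/
def Model.hopeUpd {n : ℕ} {W : Type} (M : Model n W) (c : Fin n → W → Prop) : Model n W where
  val := M.val
  K := M.K
  H := fun i w v => M.K i w v ∧ c i w ∧ c i v

/-- Truth at a world. -/
def sat {n : ℕ} {W : Type} : Model n W → W → Form n → Prop
  | M, w, .atom p => M.val p w
  | M, w, .neg φ => ¬ sat M w φ
  | M, w, .and φ ψ => sat M w φ ∧ sat M w ψ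
  | M, w, .know i φ => ∀ v, M.K i w v → sat M v φ
  | M, w, .hope i φ => ∀ v, M.H i w v → sat M v φ
  | M, w, .upd φs ψ => sat (M.hopeUpd (fun i v => sat M v (φs i))) w ψ

/-- The publicly updated model `M^{φ⃗}`. -/
def Model.pubUpdate {n : ℕ} {W : Type} (M : Model n W) (φs : Fin n → Form n) : Model n W :=
  M.hopeUpd (fun i v => sat M v (φs i))

def ftop {n : ℕ} : Form n := .neg (.and (.atom 0) (.neg (.atom 0)))
def fbot {n : ℕ} : Form n := .neg ftop
def fimpl {n : ℕ} (φ ψ : Form n) : Form n := .neg (.and φ (.neg ψ))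
def forr {n : ℕ} (φ ψ : Form n) : Form n := .neg (.and (.neg φ) (.neg ψ))
def fiff {n : ℕ} (φ ψ : Form n) : Form n := .and (fimpl φ ψ) (fimpl ψ φ)
/-- `¬H_i⊥`: agent `i` is correct. -/
def fcorrect {n : ℕ} (i : Fin n) : Form n := .neg (.hope i fbot)

/-- Validity on the class KH: true at every world of every (nonempty) model in KH. -/
def Valid {n : ℕ} (φ : Form n) : Prop :=
  ∀ (W : Type) (M : Model n W), Nonempty W → M.KH → ∀ w : W, sat M w φ

/-- Conjunction of a list of formulas. -/
def bigAnd {n : ℕ} : List (Form n) → Form n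
  | [] => ftop
  | φ :: l => .and φ (bigAnd l)

/-- Disjunction of a list of formulas. -/
def bigOr {n : ℕ} : List (Form n) → Form n
  | [] => fbot
  | φ :: l => forr φ (bigOr l)

/-- The list of all groups `G ⊆ A` of agents with `|G| = k`. -/
noncomputable def groups (n k : ℕ) : List (Finset (Fin n)) :=
  ((Finset.univ : Finset (Fin n)).powerset.filter (fun G => G.card = k)).toList

/-- `Byz_f := ⋁_{G⊆A, |G|=n−f} ⋀_{i∈G} ¬H_i⊥`: at least `n−f` agents are correct,
i.e., at most `f` agents are faulty. -/
noncomputable def Byz (n f : ℕ) : Form n :=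
  bigOr ((groups n (n - f)).map (fun G => bigAnd (G.toList.map (fun i => fcorrect i))))

/-- `φ⃗^k := ⋁_{G⊆A, |G|=k} ⋀_{i∈G} φ_i`: at least `k` of the formulas `φ_i` hold. -/
noncomputable def vecAtLeast {n : ℕ} (φs : Fin n → Form n) (k : ℕ) : Form n :=
  bigOr ((groups n k).map (fun G => bigAnd (G.toList.map φs)))

section Semantics

variable {n : ℕ} {W : Type} {M : Model n W} {w : W}

theorem not_sat_fbot : ¬ sat M w fbot := by
  simp [fbot, ftop, sat]

theorem sat_fimpl {φ ψ : Form n} : sat M w (fimpl φ ψ) ↔ (sat M w φ → sat M w ψ) := by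
  simp [fimpl, sat]

theorem sat_forr {φ ψ : Form n} : sat M w (forr φ ψ) ↔ sat M w φ ∨ sat M w ψ := by
  simp only [forr, sat, or_iff_not_and_not]

theorem sat_bigAnd {l : List (Form n)} : sat M w (bigAnd l) ↔ ∀ φ ∈ l, sat M w φ := by
  induction l with
  | nil => simp [bigAnd, ftop, sat]
  | cons φ l ih => simp [bigAnd, sat, ih]

theorem sat_bigOr {l : List (Form n)} : sat M w (bigOr l) ↔ ∃ φ ∈ l, sat M w φ := by
  induction l with
  | nil => simp [bigOr, not_sat_fbot]
  | cons φ l ih => simp [bigOr, sat_forr, ih]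

theorem sat_upd {φs : Fin n → Form n} {ψ : Form n} :
    sat M w (.upd φs ψ) ↔ sat (M.pubUpdate φs) w ψ := by
  rw [sat, Model.pubUpdate]

theorem sat_fcorrect {i : Fin n} : sat M w (fcorrect i) ↔ ∃ v, M.H i w v := by
  simp [fcorrect, sat, not_sat_fbot]

theorem mem_groups {k : ℕ} {G : Finset (Fin n)} : G ∈ groups n k ↔ G.card = k := by
  simp [groups]

theorem sat_vecAtLeast {φs : Fin n → Form n} {k : ℕ} :
    sat M w (vecAtLeast φs k) ↔ ∃ G : Finset (Fin n), G.card = k ∧ ∀ i ∈ G, sat M w (φs i) := by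
  simp [vecAtLeast, sat_bigOr, sat_bigAnd, mem_groups]

end Semantics

theorem Byz_eq_vecAtLeast_fcorrect (n f : ℕ) : Byz n f = vecAtLeast fcorrect (n - f) :=
  rfl

theorem sat_hopeUpd_fcorrect {n : ℕ} {W : Type} {M : Model n W} {w : W} {i : Fin n}
    (hK : M.K i w w) (c : Fin n → W → Prop) : sat (M.hopeUpd c) w (fcorrect i) ↔ c i w := by
  rw [sat_fcorrect]
  constructor
  · rintro ⟨_, _, hw, _⟩
    exact hw
  · -- Reflexivity makes `w` its own hope-successor in the updated model.
    intro hw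
    exact ⟨w, hK, hw, hw⟩

theorem vec_implies_Byz_general {n : ℕ} {W : Type} {M : Model n W} {w : W}
    (hK : ∀ i, M.K i w w) (φs : Fin n → Form n) (k : ℕ) :
    sat M w (.upd φs (vecAtLeast fcorrect k)) ↔ sat M w (vecAtLeast φs k) := by
  have correct_iff (i : Fin n) : sat (M.pubUpdate φs) w (fcorrect i) ↔ sat M w (φs i) :=
    sat_hopeUpd_fcorrect (hK i) _
  simp only [sat_upd, sat_vecAtLeast, correct_iff]

/-- for every `f ≤ n` and every tuple `φ⃗` of hope update formulas, the
formula `φ⃗^{n−f} → [φ⃗]Byz_f` is valid on the class KH. -/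
theorem vec_implies_Byz {n f : ℕ} (hn : 0 < n) (hf : f ≤ n) (φs : Fin n → Form n) :
    Valid (fimpl (vecAtLeast φs (n - f)) (.upd φs (Byz n f))) := by
  intro W M _ hM w
  rw [sat_fimpl, Byz_eq_vecAtLeast_fcorrect]
  exact (vec_implies_Byz_general (fun i => (hM.1 i).refl w) φs (n - f)).2
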